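/- Let d ≥ 2, k ≥ 2, 1 ≤ t ≤ k, let ψ, ψ⊥ ∈ ℂ^d be orthonormal vectors, let Ω = |ψ⟩⟨ψ| + λ(I − |ψ⟩⟨ψ|) with λ ∈ [0,1), and for ε ∈ [0,1] let ψ_ε = √(1−ε)·ψ + √ε·ψ⊥ (the unitarily rotated target state). With S_k the cyclic-shift unitary on (ℂ^d)^{⊗k} and D_k = (I + S_k)/2, the passing probability satisfies tr[(Ω^{⊗t} ⊗ I^{⊗(k−t)}) · D_k (|ψ_ε⟩⟨ψ_ε|)^{⊗k} D_k†] = (1 − (1−λ)ε)^t. -/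

import Mathlib

open Matrix Kronecker BigOperators

noncomputable section

/-- The cyclically previous index: `m - 1 (mod k)`. -/
def prevIdx {k : ℕ} (m : Fin k) : Fin k :=
  ⟨(m.val + (k - 1)) % k, Nat.mod_lt _ m.pos⟩

/-- The cyclic-shift unitary `S_k` on `(ℂ^d)^{⊗k}`, determined by
`S_k (v_1 ⊗ ⋯ ⊗ v_k) = v_k ⊗ v_1 ⊗ ⋯ ⊗ v_{k-1}`, written as a matrix in the
standard tensor-product basis indexed by functions `Fin k → Fin d`. -/
def cyc (d k : ℕ) : Matrix (Fin k → Fin d) (Fin k → Fin d) ℂ :=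
  fun g f => if g = fun m => f (prevIdx m) then 1 else 0

/-- The SWAP projection `D_k = (I + S_k)/2`. -/
def Dk (d k : ℕ) : Matrix (Fin k → Fin d) (Fin k → Fin d) ℂ :=
  (1 / 2 : ℂ) • (1 + cyc d k)

/-- The tensor product `A_1 ⊗ A_2 ⊗ ⋯ ⊗ A_k` of `d × d` matrices, acting
factor-wise on `(ℂ^d)^{⊗k}`. -/
def tensOp {d k : ℕ} (A : Fin k → Matrix (Fin d) (Fin d) ℂ) :
    Matrix (Fin k → Fin d) (Fin k → Fin d) ℂ :=
  fun g f => ∏ m, A m (g m) (f m)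

/-- The tensor product `v_1 ⊗ ⋯ ⊗ v_k` of vectors in `ℂ^d`. -/
def tensVec {d k : ℕ} (v : Fin k → (Fin d → ℂ)) : (Fin k → Fin d) → ℂ :=
  fun f => ∏ m, v m (f m)

/-- The partial trace over the last `k - 1` tensor factors, mapping matrices on
`(ℂ^d)^{⊗k}` to `d × d` matrices by tracing out factors `2` through `k`. -/
def ptraceFirst {d k : ℕ} (M : Matrix (Fin k → Fin d) (Fin k → Fin d) ℂ) :
    Matrix (Fin d) (Fin d) ℂ :=
  fun a b => ∑ r : {i : Fin k // i.val ≠ 0} → Fin d,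
    M (fun m => if h : m.val = 0 then a else r ⟨m, h⟩)
      (fun m => if h : m.val = 0 then b else r ⟨m, h⟩)

lemma prevIdx_bij {k : ℕ} : Function.Bijective (prevIdx : Fin k → Fin k) := by
  rw [← Finite.injective_iff_bijective]
  intro a b h
  have h1 : (a.val + (k - 1)) % k = (b.val + (k - 1)) % k := congrArg Fin.val h
  have h2 : a.val ≡ b.val [MOD k] := Nat.ModEq.add_right_cancel' (k - 1) h1
  exact Fin.ext (Nat.ModEq.eq_of_lt_of_lt h2 a.2 b.2)

lemma cyc_mulVec_tens {d k : ℕ} (v : Fin d → ℂ) :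
    cyc d k *ᵥ tensVec (fun _ : Fin k => v) = tensVec (fun _ : Fin k => v) := by
  funext g
  let e : Fin k ≃ Fin k := Equiv.ofBijective prevIdx prevIdx_bij
  have key : ∀ f : Fin k → Fin d, (g = fun m => f (prevIdx m)) ↔ f = fun m => g (e.symm m) := by
    intro f
    constructor
    · intro h
      funext m
      rw [h]
      exact congrArg f (e.apply_symm_apply m).symm
    · intro h
      funext m
      rw [h]
      exact congrArg g (e.symm_apply_apply m).symm
  simp only [mulVec, dotProduct, cyc, key, ite_mul, one_mul, zero_mul, Finset.sum_ite_eq',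
    Finset.sum_ite_eq, Finset.mem_univ, if_true, tensVec]
  exact Equiv.prod_comp e.symm (fun m => v (g m))

lemma Dk_mulVec_tens {d k : ℕ} (v : Fin d → ℂ) :
    Dk d k *ᵥ tensVec (fun _ : Fin k => v) = tensVec (fun _ : Fin k => v) := by
  rw [Dk, smul_mulVec, add_mulVec, one_mulVec, cyc_mulVec_tens, ← two_smul ℂ, smul_smul]
  norm_num

lemma tensOp_rank_one {d k : ℕ} (v : Fin d → ℂ) :
    tensOp (fun _ : Fin k => vecMulVec v (star v)) =
      vecMulVec (tensVec (fun _ : Fin k => v)) (star (tensVec (fun _ : Fin k => v))) := by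
  ext g f
  simp [tensOp, vecMulVec_apply, tensVec, Finset.prod_mul_distrib]

lemma tensOp_mul' {d k : ℕ} (A B : Fin k → Matrix (Fin d) (Fin d) ℂ) :
    tensOp A * tensOp B = tensOp (fun m => A m * B m) := by
  ext g f
  simp only [tensOp, Matrix.mul_apply, ← Finset.prod_mul_distrib]
  exact (Fintype.prod_sum (fun m j => A m (g m) j * B m j (f m))).symm

lemma tensOp_trace {d k : ℕ} (A : Fin k → Matrix (Fin d) (Fin d) ℂ) :
    (tensOp A).trace = ∏ m, (A m).trace := by
  simp only [tensOp, Matrix.trace, Matrix.diag]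
  exact (Fintype.prod_sum (fun m j => A m j j)).symm

/-- for the unitarily rotated target state
`ψ_ε = √(1−ε)·ψ + √ε·ψ⊥`, the passing probability is
`tr[(Ω^{⊗t} ⊗ I^{⊗(k−t)}) · D_k (|ψ_ε⟩⟨ψ_ε|)^{⊗k} D_k†] = (1−(1−λ)ε)^t`. -/
theorem stmt15 (d k t : ℕ) (hd : 2 ≤ d) (hk : 2 ≤ k) (ht1 : 1 ≤ t) (ht2 : t ≤ k)
    (ψ ψp : Fin d → ℂ) (hψ : star ψ ⬝ᵥ ψ = 1) (hψp : star ψp ⬝ᵥ ψp = 1)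
    (horth : star ψ ⬝ᵥ ψp = 0)
    (lam ε : ℝ) (hlam0 : 0 ≤ lam) (hlam1 : lam < 1) (hε0 : 0 ≤ ε) (hε1 : ε ≤ 1)
    (Ω : Matrix (Fin d) (Fin d) ℂ)
    (hΩ : Ω = vecMulVec ψ (star ψ) + (lam : ℂ) • (1 - vecMulVec ψ (star ψ)))
    (ψε : Fin d → ℂ)
    (hψε : ψε = ((Real.sqrt (1 - ε) : ℝ) : ℂ) • ψ + ((Real.sqrt ε : ℝ) : ℂ) • ψp) :
    (tensOp (fun m : Fin k => if m.val < t then Ω else 1)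
        * (Dk d k * tensOp (fun _ : Fin k => vecMulVec ψε (star ψε)) * (Dk d k)ᴴ)).trace
      = (((1 - (1 - lam) * ε) ^ t : ℝ) : ℂ) := by
  have h1 : Dk d k * tensOp (fun _ : Fin k => vecMulVec ψε (star ψε)) * (Dk d k)ᴴ
      = tensOp (fun _ : Fin k => vecMulVec ψε (star ψε)) := by
    rw [tensOp_rank_one, mul_vecMulVec, Dk_mulVec_tens, vecMulVec_mul, ← star_mulVec,
      Dk_mulVec_tens]
  have hs1 : ((Real.sqrt (1 - ε) : ℝ) : ℂ) * ((Real.sqrt (1 - ε) : ℝ) : ℂ) = 1 - ε := by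
    rw [← Complex.ofReal_mul, Real.mul_self_sqrt (by linarith)]; push_cast; rfl
  have hs2 : ((Real.sqrt ε : ℝ) : ℂ) * ((Real.sqrt ε : ℝ) : ℂ) = ε := by
    rw [← Complex.ofReal_mul, Real.mul_self_sqrt hε0]
  have ha : star ((Real.sqrt (1 - ε) : ℝ) : ℂ) = ((Real.sqrt (1 - ε) : ℝ) : ℂ) :=
    Complex.conj_ofReal _
  have hb : star ((Real.sqrt ε : ℝ) : ℂ) = ((Real.sqrt ε : ℝ) : ℂ) :=
    Complex.conj_ofReal _
  have horth2 : star ψp ⬝ᵥ ψ = 0 := by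
    have := congrArg star horth
    rwa [Matrix.star_dotProduct, star_star, star_zero] at this
  generalize ((Real.sqrt (1 - ε) : ℝ) : ℂ) = a at *
  generalize ((Real.sqrt ε : ℝ) : ℂ) = b at *
  have hΩv : Ω *ᵥ ψε = a • ψ + (lam * b) • ψp := by
    rw [hΩ, hψε, add_mulVec, smul_mulVec, sub_mulVec, one_mulVec]
    simp only [vecMulVec_mulVec, dotProduct_add, dotProduct_smul, hψ, horth]
    ext i
    simp
    ring
  have hst : star ψε = a • star ψ + b • star ψp := by
    rw [hψε, star_add, star_smul, star_smul, ha, hb]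
  have tr0 : (vecMulVec ψε (star ψε)).trace = 1 := by
    rw [trace_vecMulVec, dotProduct_comm, hst, hψε]
    simp only [add_dotProduct, dotProduct_add, smul_dotProduct, dotProduct_smul, hψ, hψp, horth,
      horth2, smul_eq_mul]
    linear_combination hs1 + hs2
  have tr1 : (Ω * vecMulVec ψε (star ψε)).trace = ((1 - (1 - lam) * ε : ℝ) : ℂ) := by
    rw [mul_vecMulVec, trace_vecMulVec, dotProduct_comm, hst, hΩv]
    simp only [add_dotProduct, dotProduct_add, smul_dotProduct, dotProduct_smul, hψ, hψp, horth,
      horth2, smul_eq_mul]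
    push_cast
    linear_combination hs1 + lam * hs2
  rw [h1, tensOp_mul', tensOp_trace]
  have h2 : ∀ m : Fin k, ((if m.val < t then Ω else 1) * vecMulVec ψε (star ψε)).trace
      = if m.val < t then ((1 - (1 - lam) * ε : ℝ) : ℂ) else 1 := by
    intro m
    split_ifs
    · exact tr1
    · rw [one_mul, tr0]
  rw [Finset.prod_congr rfl (fun m _ => h2 m), Complex.ofReal_pow,
    Fin.prod_univ_eq_prod_range (fun i => if i < t then ((1 - (1 - lam) * ε : ℝ) : ℂ) else 1) k,
    Finset.prod_ite, Finset.prod_const_one, mul_one, Finset.prod_const]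
  congr 1
  have : (Finset.range k).filter (fun i => i < t) = Finset.range t := by
    ext i
    simp only [Finset.mem_filter, Finset.mem_range]
    omega
  rw [this, Finset.card_range]
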